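/- Under the point-mass contaminated model F = (1−ε)F₀ + ε δ_{K e₁} with 0 < ε < 1/2 and A > 3/2, the map s ↦ Kurt_F(⟨u, x⟩) (where u is any unit vector with u₁² = s, the value depending on u only through s) is strictly monotone on a neighborhood of s = 1 in [0,1]; consequently every unit vector u with u₁² = 1 (i.e., u = ±e₁, the direction of the contamination) is a local extremum, relative to the unit sphere, of the kurtosis of the projections u ↦ Kurt_F(⟨u, x⟩). -/

import Mathlib

open MeasureTheory
open scoped RealInnerProductSpace ENNReal

/-!
By rotation invariance, the law of `⟪u, x⟫` under `F₀` is symmetric and the same for all unit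
vectors `u`. Expanding the central moments of the mixture therefore gives the kurtosis as an
explicit rational function of `s = u₁²`, whose derivative is a positive factor times an affine
function of `s`. An affine function that is not identically zero has no zero close to `1` other
than `1` itself, so by Rolle's theorem the kurtosis is injective, hence strictly monotone, in `s`
on a left neighborhood of `1`. Since `u₁²` is maximal on the unit sphere at `±e₁`, these are local
extrema.
-/

noncomputable section

open ProbabilityTheory Set Filter Topology

section RealAnalysis

lemma eventually_nhdsNE_add_mul_ne_zero {P Q : ℝ} (hPQ : P ≠ 0 ∨ Q ≠ 0) (b : ℝ) :
    ∀ᶠ s in 𝓝[≠] b, P + Q * s ≠ 0 := by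
  by_cases hb : P + Q * b = 0
  · have hQ : Q ≠ 0 := fun hQ => by simp_all
    filter_upwards [self_mem_nhdsWithin] with s hs
    have hfactor : P + Q * s = Q * (s - b) := by linear_combination hb
    rw [hfactor]
    exact mul_ne_zero hQ (sub_ne_zero.2 hs)
  · have hcont : Continuous fun s => P + Q * s := by fun_prop
    exact (hcont.continuousAt.eventually_ne hb).filter_mono nhdsWithin_le_nhds

lemma injOn_Icc_of_deriv_ne_zero {f : ℝ → ℝ} {a b : ℝ} (hf : ContinuousOn f (Icc a b))
    (hf' : ∀ s ∈ Ioo a b, deriv f s ≠ 0) : InjOn f (Icc a b) := by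
  intro x hx y hy hfxy
  by_contra hne
  wlog hxy : x < y generalizing x y
  · exact this hy hx hfxy.symm (Ne.symm hne) (lt_of_le_of_ne (not_lt.1 hxy) (Ne.symm hne))
  obtain ⟨c, hc, hc'⟩ := exists_deriv_eq_zero hxy (hf.mono (Icc_subset_Icc hx.1 hy.2)) hfxy
  exact hf' c (Ioo_subset_Ioo hx.1 hy.2 hc) hc'

lemma exists_strictMonoOn_or_strictAntiOn_Icc_of_deriv_ne_zero {f : ℝ → ℝ} {a b : ℝ} (hab : a < b)
    (hf : ContinuousOn f (Icc a b)) (hf' : ∀ᶠ s in 𝓝[<] b, deriv f s ≠ 0) :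
    ∃ δ > 0, StrictMonoOn f (Icc (b - δ) b) ∨ StrictAntiOn f (Icc (b - δ) b) := by
  obtain ⟨c, hc, hcb⟩ := (mem_nhdsLT_iff_exists_mem_Ico_Ioo_subset hab).1 hf'
  have hfc : ContinuousOn f (Icc c b) := hf.mono (Icc_subset_Icc_left hc.1)
  refine ⟨b - c, sub_pos.2 hc.2, ?_⟩
  rw [sub_sub_cancel]
  exact hfc.strictMonoOn_of_injOn_Icc' hc.2.le (injOn_Icc_of_deriv_ne_zero hfc hcb)

lemma isLocalExtrOn_comp_of_isLocalMaxOn {X α β : Type*} [TopologicalSpace X] [LinearOrder α]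
    [TopologicalSpace α] [OrderTopology α] [Preorder β] {g : X → α} {G : α → β} {t : Set X} {u : X}
    {c : α} (hmax : IsLocalMaxOn g t u) (hg : ContinuousWithinAt g t u) (hc : c < g u)
    (hG : MonotoneOn G (Icc c (g u)) ∨ AntitoneOn G (Icc c (g u))) :
    IsLocalExtrOn (G ∘ g) t u := by
  have hmem : ∀ᶠ v in 𝓝[t] u, g v ∈ Icc c (g u) := by
    filter_upwards [hmax, hg.eventually_const_lt hc] with v hv hcv
    exact ⟨hcv.le, hv⟩
  have htop : g u ∈ Icc c (g u) := ⟨hc.le, le_rfl⟩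
  rcases hG with hmono | hanti
  · exact Or.inr (hmem.mono fun v hv => hmono hv htop hv.2)
  · exact Or.inl (hmem.mono fun v hv => hanti hv htop hv.2)

end RealAnalysis

section Moments

variable {Ω : Type*} [MeasurableSpace Ω] {μ : Measure Ω} {X : Ω → ℝ}

/-- The (non-excess) kurtosis `E(X - EX)⁴ / (E(X - EX)²)²` of a real random variable; it takes the
junk value `0` if the variance vanishes. -/
def kurtosis (X : Ω → ℝ) (μ : Measure Ω) : ℝ :=
  centralMoment X 4 μ / centralMoment X 2 μ ^ 2

/-- The mixture `(1 - ε) μ + ε δ_a`, which models contamination of `μ` by outliers at `a`;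
meaningful for `0 ≤ ε ≤ 1`, as the weights are truncated at `0`. -/
def pointMassContamination (μ : Measure Ω) (ε : ℝ) (a : Ω) : Measure Ω :=
  ENNReal.ofReal (1 - ε) • μ + ENNReal.ofReal ε • Measure.dirac a

/-- The kurtosis, in terms of `t = X(a)²`, that a symmetric variable `X` with second moment `V` and
fourth moment `A` acquires when its law is contaminated by a point mass of weight `ε` at `a`. -/
def contaminatedKurtosis (V A ε t : ℝ) : ℝ :=
  (A + 6 * V * ε ^ 2 * t + ε * (ε ^ 3 + (1 - ε) ^ 3) * t ^ 2) / ((1 - ε) * (V + ε * t) ^ 2)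

lemma integrable_pow_of_memLp [IsFiniteMeasure μ] {k n : ℕ} (hX : MemLp X n μ) (hkn : k ≤ n) :
    Integrable (fun ω => X ω ^ k) μ := by
  have hk : MemLp X k μ := hX.mono_exponent (by exact_mod_cast hkn)
  refine (integrable_norm_iff (hX.1.pow k)).1 ?_
  simpa only [Pi.pow_apply, norm_pow] using hk.integrable_norm_pow'

lemma integral_sub_const_pow {n : ℕ} (hX : ∀ k ≤ n, Integrable (fun ω => X ω ^ k) μ) (c : ℝ) :
    ∫ ω, (X ω - c) ^ n ∂μ =
      ∑ k ∈ Finset.range (n + 1), (∫ ω, X ω ^ k ∂μ) * (-c) ^ (n - k) * n.choose k := by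
  simp only [sub_eq_add_neg, add_pow]
  rw [integral_finsetSum]
  · simp only [integral_mul_const]
  · intro k hk
    exact ((hX k (Finset.mem_range_succ_iff.1 hk)).mul_const _).mul_const _

lemma integral_pow_eq_zero_of_identDistrib_neg (hX : IdentDistrib X (-X) μ μ) {k : ℕ}
    (hk : Odd k) : ∫ ω, X ω ^ k ∂μ = 0 := by
  have hsymm : ∫ ω, X ω ^ k ∂μ = ∫ ω, (-X ω) ^ k ∂μ := (hX.pow (n := k)).integral_eq
  simp only [hk.neg_pow, integral_neg] at hsymm
  linarith

lemma integral_pointMassContamination [MeasurableSingletonClass Ω] {ε : ℝ} (hε : 0 ≤ ε)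
    (hε1 : ε ≤ 1) (a : Ω) {f : Ω → ℝ} (hf : Integrable f μ) :
    ∫ ω, f ω ∂pointMassContamination μ ε a = (1 - ε) * ∫ ω, f ω ∂μ + ε * f a := by
  rw [pointMassContamination, integral_add_measure (hf.smul_measure ENNReal.ofReal_ne_top)
    ((integrable_dirac enorm_lt_top).smul_measure ENNReal.ofReal_ne_top)]
  simp only [integral_smul_measure, integral_dirac, ENNReal.toReal_ofReal (sub_nonneg.2 hε1),
    ENNReal.toReal_ofReal hε, smul_eq_mul]

lemma centralMoment_pointMassContamination [MeasurableSingletonClass Ω] [IsFiniteMeasure μ]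
    {n : ℕ} (hn : n ≠ 0) (hX : MemLp X n μ) (hmean : ∫ ω, X ω ∂μ = 0) {ε : ℝ} (hε : 0 ≤ ε)
    (hε1 : ε ≤ 1) (a : Ω) :
    centralMoment X n (pointMassContamination μ ε a) =
      (1 - ε) * ∑ k ∈ Finset.range (n + 1),
          (∫ ω, X ω ^ k ∂μ) * (-(ε * X a)) ^ (n - k) * n.choose k +
        ε * ((1 - ε) * X a) ^ n := by
  have hX1 : Integrable X μ := hX.integrable (by exact_mod_cast Nat.one_le_iff_ne_zero.2 hn)
  have hcontMean : ∫ ω, X ω ∂pointMassContamination μ ε a = ε * X a := by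
    rw [integral_pointMassContamination hε hε1 a hX1, hmean, mul_zero, zero_add]
  have hcentered : Integrable (fun ω => (X ω - ε * X a) ^ n) μ :=
    integrable_pow_of_memLp (hX.sub (memLp_const (ε * X a))) le_rfl
  simp only [centralMoment, hcontMean, Pi.pow_apply, Pi.sub_apply]
  rw [integral_pointMassContamination hε hε1 a hcentered,
    integral_sub_const_pow fun k hk => integrable_pow_of_memLp hX hk]
  ring

theorem kurtosis_pointMassContamination [MeasurableSingletonClass Ω] [IsProbabilityMeasure μ]
    (hX : MemLp X 4 μ) (hsymm : IdentDistrib X (-X) μ μ) {ε : ℝ} (hε : 0 ≤ ε) (hε1 : ε < 1)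
    (a : Ω) :
    kurtosis X (pointMassContamination μ ε a) =
      contaminatedKurtosis (∫ ω, X ω ^ 2 ∂μ) (∫ ω, X ω ^ 4 ∂μ) ε (X a ^ 2) := by
  set V := ∫ ω, X ω ^ 2 ∂μ with hV
  set A := ∫ ω, X ω ^ 4 ∂μ with hA
  have hmass : ∫ ω, X ω ^ 0 ∂μ = 1 := by simp
  have hmean : ∫ ω, X ω ∂μ = 0 := by
    simpa only [pow_one] using integral_pow_eq_zero_of_identDistrib_neg hsymm odd_one
  have hthird : ∫ ω, X ω ^ 3 ∂μ = 0 :=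
    integral_pow_eq_zero_of_identDistrib_neg hsymm (by decide)
  have hsecondCentral : centralMoment X 2 (pointMassContamination μ ε a) =
      (1 - ε) * (V + ε * X a ^ 2) := by
    rw [centralMoment_pointMassContamination two_ne_zero
      (hX.mono_exponent (by norm_num)) hmean hε hε1.le a]
    simp only [Finset.sum_range_succ, Finset.sum_range_zero, pow_one, hmass, hmean, ← hV,
      Nat.choose]
    push_cast
    ring
  have hfourthCentral : centralMoment X 4 (pointMassContamination μ ε a) =
      (1 - ε) * (A + 6 * V * ε ^ 2 * X a ^ 2 +
        ε * (ε ^ 3 + (1 - ε) ^ 3) * (X a ^ 2) ^ 2) := by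
    rw [centralMoment_pointMassContamination four_ne_zero hX hmean hε hε1.le a]
    simp only [Finset.sum_range_succ, Finset.sum_range_zero, pow_one, hmass, hmean, hthird, ← hV,
      ← hA, Nat.choose]
    push_cast
    ring
  rw [kurtosis, hsecondCentral, hfourthCentral, contaminatedKurtosis, mul_pow, sq (1 - ε),
    mul_assoc (1 - ε) (1 - ε), mul_div_mul_left _ _ (sub_pos.2 hε1).ne']

end Moments

section ContaminatedKurtosis

variable {V A ε : ℝ}

lemma hasDerivAt_contaminatedKurtosis (hε1 : ε ≠ 1) {t : ℝ} (ht : V + ε * t ≠ 0) :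
    HasDerivAt (contaminatedKurtosis V A ε)
      (ε * (6 * ε * V ^ 2 - 2 * A + 2 * V * (1 - 3 * ε) * t) / ((1 - ε) * (V + ε * t) ^ 3)) t := by
  have h1ε : 1 - ε ≠ 0 := sub_ne_zero.2 hε1.symm
  have hnum : HasDerivAt
      (fun t => A + 6 * V * ε ^ 2 * t + ε * (ε ^ 3 + (1 - ε) ^ 3) * t ^ 2)
      (6 * V * ε ^ 2 + ε * (ε ^ 3 + (1 - ε) ^ 3) * (2 * t)) t := by
    exact ((((hasDerivAt_id t).const_mul (6 * V * ε ^ 2)).const_add A).add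
      ((hasDerivAt_pow 2 t).const_mul (ε * (ε ^ 3 + (1 - ε) ^ 3)))).congr_deriv (by simp)
  have hden : HasDerivAt (fun t => (1 - ε) * (V + ε * t) ^ 2)
      ((1 - ε) * (2 * (V + ε * t) * ε)) t := by
    simpa using ((((hasDerivAt_id t).const_mul ε).const_add V).pow 2).const_mul (1 - ε)
  refine (hnum.div hden (mul_ne_zero h1ε (pow_ne_zero 2 ht))).congr_deriv ?_
  field_simp
  ring

theorem exists_strictMonoOn_or_strictAntiOn_contaminatedKurtosis (hV : 0 < V) (hε : 0 < ε)
    (hε1 : ε < 1) (hA : ε ≠ 1 / 3 ∨ A ≠ V ^ 2) {b : ℝ} (hb : 0 < b) :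
    ∃ δ > 0, StrictMonoOn (fun s => contaminatedKurtosis V A ε (b * s)) (Icc (1 - δ) 1) ∨
      StrictAntiOn (fun s => contaminatedKurtosis V A ε (b * s)) (Icc (1 - δ) 1) := by
  have hpos : ∀ s, 0 ≤ s → 0 < V + ε * (b * s) := fun s hs => by positivity
  have hderiv : ∀ s, 0 ≤ s → HasDerivAt (contaminatedKurtosis V A ε) _ (b * s) :=
    fun s hs => hasDerivAt_contaminatedKurtosis hε1.ne (hpos s hs).ne'
  refine exists_strictMonoOn_or_strictAntiOn_Icc_of_deriv_ne_zero zero_lt_one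
    (fun s hs => ?_) ?_
  · exact ((hderiv s hs.1).continuousAt.comp (by fun_prop)).continuousWithinAt
  have haffine : 6 * ε * V ^ 2 - 2 * A ≠ 0 ∨ 2 * V * (1 - 3 * ε) * b ≠ 0 := by
    by_contra! h
    have hε3 : ε = 1 / 3 := by
      have : 1 - 3 * ε = 0 := by simpa [hV.ne', hb.ne'] using h.2
      linarith
    have hAV : A = V ^ 2 := by
      have := h.1
      rw [hε3] at this
      linarith
    exact hA.elim (· hε3) (· hAV)
  have hne : ∀ᶠ s in 𝓝[<] (1 : ℝ), 6 * ε * V ^ 2 - 2 * A + 2 * V * (1 - 3 * ε) * b * s ≠ 0 :=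
    (eventually_nhdsNE_add_mul_ne_zero haffine 1).filter_mono
      (nhdsWithin_mono 1 fun _ hs => ne_of_lt hs)
  filter_upwards [hne, Ioo_mem_nhdsLT zero_lt_one] with s hs hs01
  rw [deriv_comp_mul_left, (hderiv s hs01.1.le).deriv, smul_eq_mul, ← mul_assoc (2 * V * _) b s]
  have hden : (1 - ε) * (V + ε * (b * s)) ^ 3 ≠ 0 :=
    mul_ne_zero (sub_pos.2 hε1).ne' (pow_ne_zero 3 (hpos s hs01.1.le).ne')
  exact mul_ne_zero hb.ne' (div_ne_zero (mul_ne_zero hε.ne' hs) hden)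

end ContaminatedKurtosis

section RotationInvariant

variable {E : Type*} [NormedAddCommGroup E] [InnerProductSpace ℝ E] [MeasurableSpace E]
  [BorelSpace E] {F₀ : Measure E}

lemma identDistrib_inner_of_norm_eq (hrot : ∀ T : E ≃ₗᵢ[ℝ] E, F₀.map T = F₀) {v w : E}
    (hvw : ‖v‖ = ‖w‖) : IdentDistrib (fun x => ⟪v, x⟫) (fun x => ⟪w, x⟫) F₀ F₀ := by
  set R : E ≃ₗᵢ[ℝ] E := (ℝ ∙ (v - w))ᗮ.reflection
  have hRv : R v = w := Submodule.reflection_sub hvw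
  have hinner : (fun x => ⟪v, x⟫) = (fun x => ⟪w, x⟫) ∘ R := by
    ext x
    rw [Function.comp_apply, ← hRv, R.inner_map_map]
  have hmeas : ∀ z : E, Measurable fun x => ⟪z, x⟫ := fun z =>
    (by fun_prop : Continuous fun x => ⟪z, x⟫).measurable
  refine ⟨(hmeas v).aemeasurable, (hmeas w).aemeasurable, ?_⟩
  rw [hinner, ← Measure.map_map (hmeas w) R.continuous.measurable, hrot R]

lemma kurtosis_inner_pointMassContamination [IsProbabilityMeasure F₀]
    (hrot : ∀ T : E ≃ₗᵢ[ℝ] E, F₀.map T = F₀) (hmom : MemLp id 4 F₀) {ε : ℝ} (hε : 0 ≤ ε)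
    (hε1 : ε < 1) {e u : E} (heu : ‖u‖ = ‖e‖) (a : E) :
    kurtosis (fun x => ⟪u, x⟫) (pointMassContamination F₀ ε a) =
      contaminatedKurtosis (∫ x, ⟪e, x⟫ ^ 2 ∂F₀) (∫ x, ⟪e, x⟫ ^ 4 ∂F₀) ε (⟪u, a⟫ ^ 2) := by
  have hsymm : IdentDistrib (fun x => ⟪u, x⟫) (-fun x => ⟪u, x⟫) F₀ F₀ := by
    have hneg : (-fun x => ⟪u, x⟫) = fun x => ⟪-u, x⟫ := by
      ext x
      rw [Pi.neg_apply, inner_neg_left]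
    rw [hneg]
    exact identDistrib_inner_of_norm_eq hrot (norm_neg u).symm
  have hmoment : ∀ k : ℕ, ∫ x, ⟪u, x⟫ ^ k ∂F₀ = ∫ x, ⟪e, x⟫ ^ k ∂F₀ := fun k =>
    ((identDistrib_inner_of_norm_eq hrot heu).pow (n := k)).integral_eq
  have hmemLp : MemLp (fun x => ⟪u, x⟫) 4 F₀ := hmom.const_inner u
  rw [kurtosis_pointMassContamination hmemLp hsymm hε hε1 a, hmoment, hmoment]

theorem contamination_direction_is_local_extremum_general [IsProbabilityMeasure F₀]
    (hrot : ∀ T : E ≃ₗᵢ[ℝ] E, F₀.map T = F₀) (hmom : MemLp id 4 F₀) {e : E} (he : ‖e‖ = 1)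
    {V A : ℝ} (hV : V = ∫ x, ⟪e, x⟫ ^ 2 ∂F₀) (hV0 : 0 < V) (hA : A = ∫ x, ⟪e, x⟫ ^ 4 ∂F₀)
    {ε K : ℝ} (hε : 0 < ε) (hε1 : ε < 1) (hεA : ε ≠ 1 / 3 ∨ A ≠ V ^ 2) (hK : K ≠ 0)
    {kurt : E → ℝ}
    (hkurt : ∀ v, kurt v = kurtosis (fun x => ⟪v, x⟫) (pointMassContamination F₀ ε (K • e))) :
    ∃ G : ℝ → ℝ,
      (∀ u : E, ‖u‖ = 1 → kurt u = G (⟪u, e⟫ ^ 2)) ∧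
      (∃ δ > (0 : ℝ), StrictMonoOn G (Icc (1 - δ) 1) ∨ StrictAntiOn G (Icc (1 - δ) 1)) ∧
      (∀ u : E, ‖u‖ = 1 → ⟪u, e⟫ ^ 2 = 1 → IsLocalExtrOn kurt (Metric.sphere (0 : E) 1) u) := by
  set G : ℝ → ℝ := fun s => contaminatedKurtosis V A ε (K ^ 2 * s)
  have hkurtG : ∀ u : E, ‖u‖ = 1 → kurt u = G (⟪u, e⟫ ^ 2) := fun u hu => by
    rw [hkurt, kurtosis_inner_pointMassContamination hrot hmom hε.le hε1 (hu.trans he.symm),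
      ← hV, ← hA, real_inner_smul_right, mul_pow]
  obtain ⟨δ, hδ, hG⟩ := exists_strictMonoOn_or_strictAntiOn_contaminatedKurtosis hV0 hε hε1 hεA
    (sq_pos_of_ne_zero hK)
  refine ⟨G, hkurtG, ⟨δ, hδ, hG⟩, fun u hu hue => ?_⟩
  have hmax : IsMaxOn (fun v => ⟪v, e⟫ ^ 2) (Metric.sphere (0 : E) 1) u := fun v hv => by
    have hv1 : ‖v‖ = 1 := mem_sphere_zero_iff_norm.1 hv
    have hle : |⟪v, e⟫| ≤ 1 := by simpa [hv1, he] using abs_real_inner_le_norm v e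
    simpa [hue] using hle
  have hext := isLocalExtrOn_comp_of_isLocalMaxOn (G := G) (c := 1 - δ) hmax.localize
    (by fun_prop) (by simpa [hue] using hδ)
    (by simpa [hue] using hG.imp StrictMonoOn.monotoneOn StrictAntiOn.antitoneOn)
  have hcongr : G ∘ (fun v => ⟪v, e⟫ ^ 2) =ᶠ[𝓝[Metric.sphere (0 : E) 1] u] kurt := by
    filter_upwards [self_mem_nhdsWithin] with v hv
    exact (hkurtG v (mem_sphere_zero_iff_norm.1 hv)).symm
  exact hext.congr hcongr (mem_sphere_zero_iff_norm.2 hu)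

end RotationInvariant

end

/-- Under the point-mass contaminated model `F = (1−ε)F₀ + ε δ_{K e₁}` with
`0 < ε < 1/2` and `A > 3/2`, the kurtosis of the projection `⟪u, x⟫` depends on the unit
vector `u` only through `s = u₁²`, the resulting function of `s` is strictly monotone on
a neighborhood of `s = 1` in `[0, 1]`, and consequently every unit vector `u` with
`u₁² = 1` (i.e. `u = ±e₁`, the direction of the contamination) is a local extremum of
the kurtosis of the projections relative to the unit sphere. -/
theorem contamination_direction_is_local_extremum {p : ℕ} (hp : 0 < p)
    (F₀ : Measure (EuclideanSpace ℝ (Fin p))) [IsProbabilityMeasure F₀]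
    (hrot : ∀ T : EuclideanSpace ℝ (Fin p) ≃ₗᵢ[ℝ] EuclideanSpace ℝ (Fin p),
      Measure.map (⇑T) F₀ = F₀)
    (hmom : Integrable (fun x => ‖x‖ ^ 4) F₀)
    (hcov : ∫ x, (x ⟨0, hp⟩) ^ 2 ∂F₀ = 1)
    (A : ℝ) (hA : A = ∫ x, (x ⟨0, hp⟩) ^ 4 ∂F₀) (hA2 : 3 / 2 < A)
    (ε K : ℝ) (hε : 0 < ε) (hε2 : ε < 1 / 2) (hK : 0 < K)
    (F : Measure (EuclideanSpace ℝ (Fin p)))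
    (hF : F = ENNReal.ofReal (1 - ε) • F₀ +
      ENNReal.ofReal ε • Measure.dirac (K • EuclideanSpace.single (⟨0, hp⟩ : Fin p) 1))
    (kurt : EuclideanSpace ℝ (Fin p) → ℝ)
    (hkurt : ∀ v, kurt v =
      (∫ x, (⟪v, x⟫ - ∫ y, ⟪v, y⟫ ∂F) ^ 4 ∂F) /
        (∫ x, (⟪v, x⟫ - ∫ y, ⟪v, y⟫ ∂F) ^ 2 ∂F) ^ 2) :
    ∃ G : ℝ → ℝ,
      (∀ u : EuclideanSpace ℝ (Fin p), ‖u‖ = 1 → kurt u = G (u ⟨0, hp⟩ ^ 2)) ∧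
      (∃ δ > (0 : ℝ),
        StrictMonoOn G (Set.Icc (1 - δ) 1) ∨ StrictAntiOn G (Set.Icc (1 - δ) 1)) ∧
      (∀ u : EuclideanSpace ℝ (Fin p), ‖u‖ = 1 → u ⟨0, hp⟩ ^ 2 = 1 →
        IsLocalMaxOn kurt (Metric.sphere (0 : EuclideanSpace ℝ (Fin p)) 1) u ∨
        IsLocalMinOn kurt (Metric.sphere (0 : EuclideanSpace ℝ (Fin p)) 1) u) := by
  subst hF
  obtain ⟨G, hkurtG, hmono, hext⟩ := contamination_direction_is_local_extremum_general
    (e := EuclideanSpace.single ⟨0, hp⟩ 1) (V := 1) (K := K) hrot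
    ((integrable_norm_rpow_iff (by fun_prop) (by norm_num) (by norm_num)).1 (by simpa using hmom))
    (by simp) (by simpa [EuclideanSpace.inner_single_left] using hcov.symm) one_pos
    (by simpa [EuclideanSpace.inner_single_left] using hA) hε (by linarith)
    (Or.inr (by linarith)) hK.ne' hkurt
  simp only [EuclideanSpace.inner_single_right] at hkurtG hext
  exact ⟨G, by simpa using hkurtG, hmono, fun u hu hu1 => (hext u hu (by simpa using hu1)).symm⟩
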